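/- Under the independence-of-resampled-tokens assumption, one resampling step preserves the autoregressive law: define Q : V^n → [0,1] by Q(z) = Σ_{y ∈ V^n, y_i = z_i for all i ∉ L} P(y) · ∏_{j∈L} p_j(y_1,…,y_{j−1})(z_j). Then Q is a probability mass function on V^n and Q = P. In other words, if one first samples y according to P and then, independently for each j ∈ L, replaces the j-th token by a fresh sample from p_j(y_1,…,y_{j−1}) while keeping all tokens outside L, the resulting sequence is again distributed according to P. -/

import Mathlib

/-!
The independence assumption, applied to one position of `L` at a time, shows that the conditional
`p i (prefixOf y i)` is the same for all `y` agreeing with `z` outside `L`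
(`IndepResampledTokens.apply_prefixOf_eq`). In the sum defining `Q z` every conditional can therefore
be replaced by `q i = p i (prefixOf z i)`. The sum over `y` then factorizes over positions: those in
`L` contribute the total mass `1`, those outside `L` contribute `q i (z i)`, and the resampling
product supplies the remaining factors `q j (z j)`, `j ∈ L`. So `Q = P`, and `Q` has total mass `1`
because the autoregressive product does (`sum_autoregressive`).
-/

/-- The prefix `(x_1, …, x_{i-1})` of a sequence `x ∈ V^n`, i.e. the restriction of `x`
to the positions strictly before `i`. -/
def prefixOf {V : Type*} {n : ℕ} (x : Fin n → V) (i : Fin n) : Fin i → V :=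
  fun l => x ⟨l, l.isLt.trans i.isLt⟩

/-- **Independence of resampled tokens** (Assumption 3.1): for every `j ∈ L`, every
position `i > j`, and any two prefixes `w, w'` of length `i` agreeing everywhere except
possibly at position `j`, the conditional next-token distributions agree: `p i w = p i w'`. -/
def IndepResampledTokens {V : Type*} {n : ℕ}
    (p : (i : Fin n) → (Fin i → V) → PMF V) (L : Finset (Fin n)) : Prop :=
  ∀ j ∈ L, ∀ i : Fin n, j < i → ∀ w w' : Fin i → V,
    (∀ l : Fin i, (l : ℕ) ≠ (j : ℕ) → w l = w' l) → p i w = p i w'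

/-- Changing a sequence at positions of `L` does not change any conditional distribution. -/
theorem IndepResampledTokens.apply_prefixOf_eq {V : Type*} {n : ℕ}
    {p : (i : Fin n) → (Fin i → V) → PMF V} {L : Finset (Fin n)}
    (hp : IndepResampledTokens p L) (i : Fin n) {y z : Fin n → V}
    (h : ∀ k ∉ L, y k = z k) : p i (prefixOf y i) = p i (prefixOf z i) := by
  suffices H : ∀ S ⊆ L, ∀ y : Fin n → V, (∀ k ∉ S, y k = z k) →
      p i (prefixOf y i) = p i (prefixOf z i) from H L subset_rfl y h
  intro S
  induction S using Finset.induction_on with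
  | empty =>
    intro _ y hy
    rw [show y = z from funext fun k => hy k (Finset.notMem_empty k)]
  | insert j T _ ih =>
    intro hS y hy
    rw [Finset.insert_subset_iff] at hS
    -- Overwrite position `j` first; the result agrees with `z` outside `T`.
    have h2 := ih hS.2 (Function.update y j (z j)) (by
      intro k hk
      by_cases hkj : k = j
      · subst hkj; simp
      · rw [Function.update_of_ne hkj]
        exact hy k (by simp [hkj, hk]))
    rw [← h2]
    have hagree : ∀ l : Fin i, (l : ℕ) ≠ (j : ℕ) →
        prefixOf y i l = prefixOf (Function.update y j (z j)) i l := by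
      intro l hl
      unfold prefixOf
      rw [Function.update_of_ne]
      intro hlj
      exact hl (congrArg Fin.val hlj)
    by_cases hji : j < i
    · exact hp j hS.1 i hji _ _ hagree
    · congr 1
      funext l
      refine hagree l fun hlj => hji ?_
      rw [Fin.lt_def, ← hlj]
      exact l.isLt

theorem PMF.sum_univ_eq_one {V : Type*} [Fintype V] (q : PMF V) : ∑ v, q v = 1 := by
  rw [← tsum_fintype (L := .unconditional V), q.tsum_coe]

/-- The autoregressive product has total mass `1`: sum out the last token and induct on the
length. -/
theorem sum_autoregressive {V : Type*} [Fintype V] {n : ℕ}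
    (p : (i : Fin n) → (Fin i → V) → PMF V) :
    ∑ x : Fin n → V, ∏ i : Fin n, p i (prefixOf x i) (x i) = 1 := by
  induction n with
  | zero => simp
  | succ n ih =>
    rw [← (Fin.snocEquiv fun _ : Fin (n + 1) => V).sum_comp, Fintype.sum_prod_type_right,
      ← ih fun i => p i.castSucc]
    refine Finset.sum_congr rfl fun x _ => ?_
    have hpre : ∀ (a : V) (i : Fin n),
        prefixOf (Fin.snoc x a : Fin (n + 1) → V) i.castSucc = prefixOf x i := by
      intro a i
      funext l
      exact Fin.snoc_castSucc (α := fun _ => V) a x ⟨l, l.isLt.trans i.isLt⟩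
    have hlast : ∀ a : V, prefixOf (Fin.snoc x a : Fin (n + 1) → V) (Fin.last n) = x := by
      intro a
      funext l
      exact Fin.snoc_castSucc (α := fun _ => V) a x l
    simp only [Fin.snocEquiv, Equiv.coe_fn_mk, Fin.prod_univ_castSucc, hpre, hlast,
      Fin.snoc_castSucc, Fin.snoc_last]
    rw [← Finset.mul_sum]
    exact (congrArg _ (PMF.sum_univ_eq_one _)).trans (mul_one _)

/-- Under the independence-of-resampled-tokens assumption, one resampling step preserves
the autoregressive law: with
`Q(z) = Σ_{y : y_i = z_i ∀ i ∉ L} P(y) · ∏_{j∈L} p_j(y_{<j})(z_j)`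
(first sample `y` autoregressively, then independently resample each position `j ∈ L`
from `p_j(y_{<j})` keeping all tokens outside `L`), `Q` is a probability mass function
on `V^n` and `Q = P`, where `P(x) = ∏_i p_i(x_{<i})(x_i)`. -/
theorem resampling_preserves_autoregressive_law
    {V : Type*} [Fintype V] [Nonempty V] [DecidableEq V] {n : ℕ}
    (p : (i : Fin n) → (Fin i → V) → PMF V) (L : Finset (Fin n))
    (hp : IndepResampledTokens p L) :
    (∑ z : Fin n → V,
        ∑ y ∈ Finset.univ.filter (fun y : Fin n → V => ∀ i ∉ L, y i = z i),
          (∏ i : Fin n, p i (prefixOf y i) (y i)) * ∏ j ∈ L, p j (prefixOf y j) (z j))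
        = 1
    ∧ ∀ z : Fin n → V,
        (∑ y ∈ Finset.univ.filter (fun y : Fin n → V => ∀ i ∉ L, y i = z i),
          (∏ i : Fin n, p i (prefixOf y i) (y i)) * ∏ j ∈ L, p j (prefixOf y j) (z j))
        = ∏ i : Fin n, p i (prefixOf z i) (z i) := by
  have key : ∀ z : Fin n → V,
      (∑ y ∈ Finset.univ.filter (fun y : Fin n → V => ∀ i ∉ L, y i = z i),
        (∏ i : Fin n, p i (prefixOf y i) (y i)) * ∏ j ∈ L, p j (prefixOf y j) (z j))
      = ∏ i : Fin n, p i (prefixOf z i) (z i) := by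
    intro z
    have hset : Finset.univ.filter (fun y : Fin n → V => ∀ i ∉ L, y i = z i)
        = Fintype.piFinset fun i => if i ∈ L then Finset.univ else {z i} := by
      ext y
      simp only [Finset.mem_filter, Finset.mem_univ, true_and, Fintype.mem_piFinset]
      refine forall_congr' fun i => ?_
      by_cases hi : i ∈ L <;> simp [hi]
    calc
      _ = ∑ y ∈ Finset.univ.filter (fun y : Fin n → V => ∀ i ∉ L, y i = z i),
            (∏ i : Fin n, p i (prefixOf z i) (y i)) * ∏ j ∈ L, p j (prefixOf z j) (z j) := by
          refine Finset.sum_congr rfl fun y hy => ?_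
          have hy' := (Finset.mem_filter.mp hy).2
          simp only [fun i => hp.apply_prefixOf_eq i hy']
      _ = (∏ i : Fin n, if i ∈ L then 1 else p i (prefixOf z i) (z i))
            * ∏ j ∈ L, p j (prefixOf z j) (z j) := by
          rw [← Finset.sum_mul, hset, ← Finset.prod_univ_sum]
          congr 1
          refine Finset.prod_congr rfl fun i _ => ?_
          by_cases hi : i ∈ L <;> simp [hi, PMF.sum_univ_eq_one]
      _ = ∏ i : Fin n, p i (prefixOf z i) (z i) := by
          rw [← Finset.prod_subset (Finset.subset_univ Lᶜ)
            (fun i _ hi => by simp [Finset.mem_compl] at hi; simp [hi]),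
            Finset.prod_congr rfl (g := fun i => p i (prefixOf z i) (z i))
              (fun i hi => by simp [Finset.mem_compl.mp hi]),
            Finset.prod_compl_mul_prod]
  refine ⟨?_, key⟩
  rw [Finset.sum_congr rfl fun z _ => key z]
  exact sum_autoregressive p
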